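/- Let 𝒞 be a small category, (−⊗I) elementary homotopy data on Psh(𝒞), and T a monad on Psh(𝒞) satisfying (M1)–(M3). Let 𝔚' be any collection of maps in Psh(𝒞) such that: (i) 𝔚' has the three-for-two property (for composable maps f and g, if any two of f, g, g∘f lie in 𝔚', so does the third); (ii) 𝔚' contains every homotopy equivalence (every f : X → Y for which there exists f' : Y → X with f' ∘ f ≃* id_X and f ∘ f' ≃* id_Y); and (iii) 𝔚' contains every unit η_X : X → TX. Then every T-weak equivalence belongs to 𝔚'. -/

import Mathlib

open CategoryTheory Category Limits

universe w v u

/-- The category of presheaves on a small category. -/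
abbrev Psh (C : Type u) [SmallCategory C] := Cᵒᵖ ⥤ Type u

namespace PaperMSMonad

/-- `f` is a retract of `g` in the arrow category. -/
def IsRetractOf {D : Type*} [Category D] {X Y Z W : D} (f : X ⟶ Y) (g : Z ⟶ W) : Prop :=
  ∃ (i : X ⟶ Z) (r : Z ⟶ X) (i' : Y ⟶ W) (r' : W ⟶ Y),
    i ≫ r = 𝟙 X ∧ i' ≫ r' = 𝟙 Y ∧ i ≫ g = f ≫ i' ∧ g ≫ r' = r ≫ f

/-- The cocone on the restriction of `F : J ⥤ D` to `Set.Iio j`, with point `F.obj j`. -/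
@[simps]
def coconeLT {D : Type*} [Category D] {J : Type w} [Preorder J] (F : J ⥤ D) (j : J) :
    Cocone ((Monotone.functor (f := (Subtype.val : Set.Iio j → J))
      (fun _ _ h => h)) ⋙ F) where
  pt := F.obj j
  ι :=
    { app := fun i => F.map (homOfLE i.2.le)
      naturality := fun i i' g => by
        dsimp [Monotone.functor]
        rw [Category.comp_id, ← F.map_comp]
        rfl }

/-- A morphism property is stable under transfinite composition if, for every well-ordered
type `J`, every functor `F : J ⥤ D` which is continuous at limit stages and whose successor
maps all lie in `W`, and every colimit cocone on `F`, the component of the cocone at the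
bottom element lies in `W`. -/
def StableUnderTransfiniteComposition {D : Type*} [Category D]
    (W : MorphismProperty D) : Prop :=
  ∀ (J : Type w) (_ : LinearOrder J) (_ : SuccOrder J) (_ : OrderBot J) (_ : WellFoundedLT J)
    (F : J ⥤ D),
    (∀ (j : J), ¬IsMax j → W (F.map (homOfLE (Order.le_succ j)))) →
    (∀ (j : J), Order.IsSuccLimit j → Nonempty (IsColimit (coconeLT F j))) →
    ∀ (c : Cocone F), Nonempty (IsColimit c) → W (c.ι.app ⊥)

/-- A class of morphisms is weakly saturated if it contains all isomorphisms and is closed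
under pushout (cobase change), retracts and transfinite composition. -/
def IsWeaklySaturated {D : Type*} [Category D] (W : MorphismProperty D) : Prop :=
  (∀ ⦃X Y : D⦄ (f : X ⟶ Y), IsIso f → W f) ∧
  (∀ ⦃Z X Y P : D⦄ (t : Z ⟶ X) (f : Z ⟶ Y) (g : X ⟶ P) (b : Y ⟶ P),
      IsPushout t f g b → W f → W g) ∧
  (∀ ⦃X Y Z W' : D⦄ (f : X ⟶ Y) (g : Z ⟶ W'), IsRetractOf f g → W g → W f) ∧
  StableUnderTransfiniteComposition.{w} W

/-- The saturated class generated by `S`: the smallest weakly saturated class containing `S`. -/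
def SaturatedClassGen {D : Type*} [Category D] (S : MorphismProperty D) :
    MorphismProperty D :=
  fun _ _ f => ∀ W : MorphismProperty D, IsWeaklySaturated.{w} W → S ≤ W → W f

/-- The maps having the right lifting property with respect to all maps in `S`. -/
def RLP {D : Type*} [Category D] (S : MorphismProperty D) : MorphismProperty D :=
  fun _ _ g => ∀ ⦃A B : D⦄ (f : A ⟶ B), S f → HasLiftingProperty f g

/-- The maps having the left lifting property with respect to all maps in `S`. -/
def LLP {D : Type*} [Category D] (S : MorphismProperty D) : MorphismProperty D :=
  fun _ _ f => ∀ ⦃A B : D⦄ (g : A ⟶ B), S g → HasLiftingProperty f g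

end PaperMSMonad

namespace PaperMSMonad

variable {C : Type u} [SmallCategory C]

/-- Elementary homotopy data on the category of presheaves on `C`: a functorial cylinder
`X ↦ X ⊗ I` with endpoint inclusions `∂⁰`, `∂¹` and projection `σ`, such that
`[∂⁰,∂¹] : X + X → X ⊗ I` is always a monomorphism, the cylinder functor preserves small
colimits and monomorphisms, and the endpoint naturality squares at monomorphisms
are pullbacks. -/
structure ElementaryHomotopyData (C : Type u) [SmallCategory C] where
  cyl : Psh C ⥤ Psh C
  d0 : 𝟭 (Psh C) ⟶ cyl
  d1 : 𝟭 (Psh C) ⟶ cyl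
  σ : cyl ⟶ 𝟭 (Psh C)
  d0_σ : ∀ X : Psh C, d0.app X ≫ σ.app X = 𝟙 X
  d1_σ : ∀ X : Psh C, d1.app X ≫ σ.app X = 𝟙 X
  mono_pair : ∀ X : Psh C, Mono (coprod.desc (d0.app X) (d1.app X))
  preservesColimits : PreservesColimitsOfSize.{u, u} cyl
  preservesMono : ∀ ⦃K L : Psh C⦄ (j : K ⟶ L), Mono j → Mono (cyl.map j)
  isPullback0 : ∀ ⦃K L : Psh C⦄ (j : K ⟶ L), Mono j →
    IsPullback j (d0.app K) (d0.app L) (cyl.map j)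
  isPullback1 : ∀ ⦃K L : Psh C⦄ (j : K ⟶ L), Mono j →
    IsPullback j (d1.app K) (d1.app L) (cyl.map j)

namespace ElementaryHomotopyData

variable (E : ElementaryHomotopyData C)

/-- `f ≃ g`: there is a homotopy `θ : X ⊗ I ⟶ Y` from `f` to `g`. -/
def Htpy {X Y : Psh C} (f g : X ⟶ Y) : Prop :=
  ∃ θ : E.cyl.obj X ⟶ Y, E.d0.app X ≫ θ = f ∧ E.d1.app X ≫ θ = g

/-- `f ≃* g`: the equivalence relation generated by the homotopy relation. -/
def HtpyStar {X Y : Psh C} (f g : X ⟶ Y) : Prop :=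
  Relation.EqvGen (fun a b : X ⟶ Y => E.Htpy a b) f g

/-- `[X,Y]`: the quotient of `Hom(X,Y)` by the equivalence relation generated by homotopy. -/
def HQ (X Y : Psh C) :=
  Quot (fun a b : X ⟶ Y => E.Htpy a b)

/-- The class of `f : X ⟶ Y` in `[X,Y]`. -/
def HQ.mk {X Y : Psh C} (f : X ⟶ Y) : E.HQ X Y :=
  Quot.mk _ f

/-- `[f,A] : [Y,A] → [X,A]`, precomposition with `f` on homotopy classes. -/
def precomp {X Y A : Psh C} (f : X ⟶ Y) : E.HQ Y A → E.HQ X A :=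
  Quot.lift (fun h => HQ.mk E (f ≫ h)) (fun h h' hh => Quot.sound (by
    obtain ⟨θ, h0, h1⟩ := hh
    exact ⟨E.cyl.map f ≫ θ,
      by rw [← Category.assoc, ← E.d0.naturality, Functor.id_map, Category.assoc, h0],
      by rw [← Category.assoc, ← E.d1.naturality, Functor.id_map, Category.assoc, h1]⟩))

/-- For a monomorphism `j : K ⟶ L` the canonical map `K⊗I ∪ L⊗{0} ⟶ L⊗I`. -/
noncomputable def gluing0 {K L : Psh C} (j : K ⟶ L) :
    pushout (E.d0.app K) j ⟶ E.cyl.obj L :=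
  pushout.desc (E.cyl.map j) (E.d0.app L) (by rw [← E.d0.naturality j]; rfl)

/-- For a monomorphism `j : K ⟶ L` the canonical map `K⊗I ∪ L⊗{1} ⟶ L⊗I`. -/
noncomputable def gluing1 {K L : Psh C} (j : K ⟶ L) :
    pushout (E.d1.app K) j ⟶ E.cyl.obj L :=
  pushout.desc (E.cyl.map j) (E.d1.app L) (by rw [← E.d1.naturality j]; rfl)

/-- For a map `j : K ⟶ L` the canonical map `K⊗I ∪ L⊗∂I ⟶ L⊗I`. -/
noncomputable def gluingBoth {K L : Psh C} (j : K ⟶ L) :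
    pushout (coprod.desc (E.d0.app K) (E.d1.app K)) (coprod.map j j) ⟶ E.cyl.obj L :=
  pushout.desc (E.cyl.map j) (coprod.desc (E.d0.app L) (E.d1.app L)) (by
    apply coprod.hom_ext
    · rw [coprod.inl_desc_assoc, coprod.inl_map_assoc, coprod.inl_desc]
      exact (E.d0.naturality j).symm
    · rw [coprod.inr_desc_assoc, coprod.inr_map_assoc, coprod.inr_desc]
      exact (E.d1.naturality j).symm)

/-- The class `Λ⁰_I(S)`. -/
inductive Lambda0 (E : ElementaryHomotopyData C) (S : MorphismProperty (Psh C)) :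
    ∀ ⦃X Y : Psh C⦄, (X ⟶ Y) → Prop
  | ofS ⦃X Y : Psh C⦄ (f : X ⟶ Y) : S f → Lambda0 E S f
  | glue0 ⦃K L : Psh C⦄ (j : K ⟶ L) : Mono j → Lambda0 E S (E.gluing0 j)
  | glue1 ⦃K L : Psh C⦄ (j : K ⟶ L) : Mono j → Lambda0 E S (E.gluing1 j)

/-- The operation `𝚲(-)` applied to a class of maps. -/
inductive LambdaStep (E : ElementaryHomotopyData C) (P : MorphismProperty (Psh C)) :
    ∀ ⦃X Y : Psh C⦄, (X ⟶ Y) → Prop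
  | glue ⦃K L : Psh C⦄ (j : K ⟶ L) : P j → LambdaStep E P (E.gluingBoth j)

/-- The class `Λⁿ_I(S)`. -/
def LambdaN (S : MorphismProperty (Psh C)) : ℕ → MorphismProperty (Psh C)
  | 0 => Lambda0 E S
  | (n + 1) => LambdaStep E (LambdaN S n)

/-- The class `Λ_I(S) = ⋃ₙ Λⁿ_I(S)`. -/
def Lambda (S : MorphismProperty (Psh C)) : MorphismProperty (Psh C) :=
  fun _ _ f => ∃ n : ℕ, LambdaN E S n f

/-- The class `𝔄_I(S)` of anodyne extensions: maps with the left lifting property with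
respect to every map having the right lifting property with respect to `Λ_I(S)`. -/
def Anodyne (S : MorphismProperty (Psh C)) : MorphismProperty (Psh C) :=
  LLP (RLP (E.Lambda S))

/-- `A` is naively fibrant if `A ⟶ 1` has the right lifting property with respect to all
anodyne extensions. -/
def NaivelyFibrant (S : MorphismProperty (Psh C)) (A : Psh C) : Prop :=
  RLP (E.Anodyne S) (terminal.from A)

/-- A map `f : X ⟶ Y` is a `T`-weak equivalence if `[f,A] : [Y,A] → [X,A]` is a bijection
for every `T`-algebra `A`. -/
def TWeakEquiv (T : Monad (Psh C)) : MorphismProperty (Psh C) :=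
  fun _ _ f => ∀ A : T.Algebra, Function.Bijective (E.precomp (A := A.A) f)

end ElementaryHomotopyData

/-- The generating set of units `𝔊 = {η_{Gⁱ} : Gⁱ ⟶ T(Gⁱ)}`. -/
inductive unitsOf (T : Monad (Psh C)) {ι : Type u} (G : ι → Psh C) :
    ∀ ⦃X Y : Psh C⦄, (X ⟶ Y) → Prop
  | mk (i : ι) : unitsOf T G (T.η.app (G i))

end PaperMSMonad

namespace PaperMSMonad

open CategoryTheory Category Limits

/-!
For `f : X ⟶ Y` compare `f ≫ η_Y = η_X ≫ T f`. By the three-for-two property it is enough that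
`T f` is a homotopy equivalence when `f` is a `T`-weak equivalence. If the units are `T`-weak
equivalences, so is `T f`, and a `T`-weak equivalence between carriers of `T`-algebras is a homotopy
equivalence by the Yoneda argument.

For a `T`-algebra `A` the map `[η_X, A]` is bijective because maps `X ⟶ A` extend along `η_X` and
homotopies extend relative to their ends. The latter property is, for a map `j`, the left lifting
property against the map from the path object of `A` to `A ⨯ A`; it holds for the generating units
by naive fibrancy of `A`, hence on the saturated class they generate, which contains `η_X`.
-/

section Saturation

variable {D : Type*} [Category D]

theorem IsRetractOf.nonempty_retractArrow {X Y Z W : D} {f : X ⟶ Y} {g : Z ⟶ W}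
    (h : IsRetractOf f g) : Nonempty (RetractArrow f g) := by
  obtain ⟨i, r, i', r', hir, hir', hi, hr⟩ := h
  exact ⟨{ i := Arrow.homMk i i' hi
           r := Arrow.homMk r r' hr.symm
           retract := Arrow.hom_ext _ _ hir hir' }⟩

theorem isWeaklySaturated_llp (R : MorphismProperty D) : IsWeaklySaturated.{w} R.llp := by
  refine ⟨fun _ _ f _ => R.llp_of_isIso f, fun _ _ _ _ _ _ _ _ sq hf => R.llp.of_isPushout sq hf,
    fun _ _ _ _ _ _ h hg => R.llp.of_retract h.nonempty_retractArrow.some hg, ?_⟩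
  intro J _ _ _ _ F hsucc hlim c hc _ _ p hp
  have : F.IsWellOrderContinuous := ⟨fun m hm => hlim m hm⟩
  exact HasLiftingProperty.transfiniteComposition.hasLiftingProperty_ι_app_bot
    (hc := hc.some) (fun j hj => hsucc j hj p hp)

theorem saturatedClassGen_le_rlp_llp (S : MorphismProperty D) :
    SaturatedClassGen.{w} S ≤ S.rlp.llp :=
  fun _ _ _ hf => hf _ (isWeaklySaturated_llp S.rlp) S.le_llp_rlp

end Saturation

theorem surjective_unit_comp {D : Type*} [Category D] {T : Monad D} (A : T.Algebra) (X : D) :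
    Function.Surjective fun h : T.obj X ⟶ A.A => T.η.app X ≫ h := fun g =>
  ⟨T.map g ≫ A.a, by
    have h := T.η.naturality_assoc g A.a
    rw [A.unit] at h
    exact h.symm.trans (comp_id g)⟩

namespace ElementaryHomotopyData

variable {C : Type u} [SmallCategory C] (E : ElementaryHomotopyData C)

section HomotopyClasses

variable {A X Y Z K L : Psh C}

theorem Htpy.refl (f : X ⟶ Y) : E.Htpy f f :=
  ⟨E.σ.app X ≫ f, by rw [← assoc, E.d0_σ]; exact id_comp f,
    by rw [← assoc, E.d1_σ]; exact id_comp f⟩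

variable {E} in
theorem Htpy.comp_right {f g : X ⟶ Y} (h : E.Htpy f g) (k : Y ⟶ Z) :
    E.Htpy (f ≫ k) (g ≫ k) := by
  obtain ⟨θ, rfl, rfl⟩ := h
  exact ⟨θ ≫ k, (assoc _ _ _).symm, (assoc _ _ _).symm⟩

theorem HQ.mk_eq_mk_iff {f g : X ⟶ Y} : HQ.mk E f = HQ.mk E g ↔ E.HtpyStar f g :=
  Quot.eq

variable {E} in
theorem HtpyStar.comp_right {f g : X ⟶ Y} (h : E.HtpyStar f g) (k : Y ⟶ Z) :
    E.HtpyStar (f ≫ k) (g ≫ k) :=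
  (HQ.mk_eq_mk_iff E).1 (congrArg (Quot.map (· ≫ k) fun _ _ h' => h'.comp_right k)
    ((HQ.mk_eq_mk_iff E).2 h))

theorem precomp_comp (f : X ⟶ Y) (g : Y ⟶ Z) :
    E.precomp (A := A) (f ≫ g) = E.precomp f ∘ E.precomp g := by
  funext q
  obtain ⟨h⟩ := q
  exact congrArg (HQ.mk E) (assoc f g h)

theorem exists_htpyInverse {f : X ⟶ Y} (hX : Function.Surjective (E.precomp (A := X) f))
    (hY : Function.Injective (E.precomp (A := Y) f)) :
    ∃ f' : Y ⟶ X, E.HtpyStar (f ≫ f') (𝟙 X) ∧ E.HtpyStar (f' ≫ f) (𝟙 Y) := by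
  obtain ⟨⟨f'⟩, hf'⟩ := hX (HQ.mk E (𝟙 X))
  have hff' : E.HtpyStar (f ≫ f') (𝟙 X) := (HQ.mk_eq_mk_iff E).1 hf'
  have hff'f : E.HtpyStar (f ≫ f' ≫ f) (f ≫ 𝟙 Y) := by
    simpa only [assoc, id_comp, comp_id] using hff'.comp_right f
  exact ⟨f', hff', (HQ.mk_eq_mk_iff E).1 (hY ((HQ.mk_eq_mk_iff E).2 hff'f))⟩

/-- Homotopies into `A` extend along `j : K ⟶ L` relative to prescribed extensions of their two
ends. It is the lifting property of `K⊗I ∪ L⊗∂I ⟶ L⊗I` against `A ⟶ 1`, spelled out. -/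
def ExtendsHomotopies (A : Psh C) (j : K ⟶ L) : Prop :=
  ∀ (θ : E.cyl.obj K ⟶ A) (b c : L ⟶ A), E.d0.app K ≫ θ = j ≫ b → E.d1.app K ≫ θ = j ≫ c →
    ∃ ψ : E.cyl.obj L ⟶ A, E.cyl.map j ≫ ψ = θ ∧ E.d0.app L ≫ ψ = b ∧ E.d1.app L ≫ ψ = c

variable {E} {j : K ⟶ L}

theorem ExtendsHomotopies.of_gluingBoth
    (h : HasLiftingProperty (E.gluingBoth j) (terminal.from A)) : E.ExtendsHomotopies A j := by
  intro θ b c hb hc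
  have hends : coprod.desc (E.d0.app K) (E.d1.app K) ≫ θ =
      coprod.map j j ≫ coprod.desc b c := by
    rw [coprod.desc_comp, coprod.map_desc, hb, hc]
    rfl
  have sq : CommSq (pushout.desc θ (coprod.desc b c) hends) (E.gluingBoth j) (terminal.from A)
      (terminal.from _) := ⟨terminal.hom_ext _ _⟩
  have hmap := congrArg (pushout.inl _ _ ≫ ·) sq.fac_left
  have hend0 := congrArg (coprod.inl ≫ pushout.inr _ _ ≫ ·) sq.fac_left
  have hend1 := congrArg (coprod.inr ≫ pushout.inr _ _ ≫ ·) sq.fac_left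
  simp only [gluingBoth, pushout.inl_desc, pushout.inl_desc_assoc, pushout.inr_desc,
    pushout.inr_desc_assoc, coprod.inl_desc, coprod.inr_desc, coprod.inl_desc_assoc,
    coprod.inr_desc_assoc] at hmap hend0 hend1
  exact ⟨sq.lift, hmap, hend0, hend1⟩

theorem ExtendsHomotopies.htpy_of_comp_left (hj : E.ExtendsHomotopies A j) {b c : L ⟶ A}
    (h : E.Htpy (j ≫ b) (j ≫ c)) : E.Htpy b c := by
  obtain ⟨θ, hb, hc⟩ := h
  obtain ⟨ψ, -, hψb, hψc⟩ := hj θ b c hb hc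
  exact ⟨ψ, hψb, hψc⟩

theorem ExtendsHomotopies.bijective_precomp (hj : E.ExtendsHomotopies A j)
    (hsurj : Function.Surjective fun b : L ⟶ A => j ≫ b) :
    Function.Bijective (E.precomp (A := A) j) := by
  choose s hs using hsurj
  -- Any section `s` of `j ≫ -` preserves homotopies, hence descends to an inverse of `[j, A]`.
  have hs_htpy (g g' : K ⟶ A) (h : E.Htpy g g') : E.Htpy (s g) (s g') :=
    hj.htpy_of_comp_left (by simpa only [hs] using h)
  refine Function.bijective_iff_has_inverse.2 ⟨Quot.map s hs_htpy, ?_, ?_⟩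
  · rintro ⟨b⟩
    have hb : E.Htpy (s (j ≫ b)) b :=
      hj.htpy_of_comp_left (by simpa only [hs] using Htpy.refl E (j ≫ b))
    exact Quot.sound hb
  · rintro ⟨g⟩
    exact congrArg (HQ.mk E) (hs g)

end HomotopyClasses

section PathObject

instance isLeftAdjoint_cyl : E.cyl.IsLeftAdjoint :=
  have := E.preservesColimits
  Presheaf.isLeftAdjoint_of_preservesColimits.{u} E.cyl

/-- The object of paths in `A`, obtained from the right adjoint of the cylinder functor. -/
noncomputable def pathObject (A : Psh C) : Psh C :=
  E.cyl.rightAdjoint.obj A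

/-- Homotopies parametrised by `X` are maps from `X` to the path object. -/
noncomputable def pathEquiv (X A : Psh C) : (E.cyl.obj X ⟶ A) ≃ (X ⟶ E.pathObject A) :=
  (Adjunction.ofIsLeftAdjoint E.cyl).homEquiv X A

/-- The map sending a path in `A` to the pair of its two ends. -/
noncomputable def pathEnds (A : Psh C) : E.pathObject A ⟶ A ⨯ A :=
  prod.lift (E.d0.app _ ≫ (E.pathEquiv _ A).symm (𝟙 _)) (E.d1.app _ ≫ (E.pathEquiv _ A).symm (𝟙 _))

variable {A X K L : Psh C}

theorem comp_pathEquiv (j : K ⟶ L) (ψ : E.cyl.obj L ⟶ A) :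
    j ≫ E.pathEquiv L A ψ = E.pathEquiv K A (E.cyl.map j ≫ ψ) :=
  ((Adjunction.ofIsLeftAdjoint E.cyl).homEquiv_naturality_left j ψ).symm

theorem map_pathEquiv_comp (θ : E.cyl.obj X ⟶ A) :
    E.cyl.map (E.pathEquiv X A θ) ≫ (E.pathEquiv _ A).symm (𝟙 _) = θ := by
  apply (E.pathEquiv X A).injective
  rw [← comp_pathEquiv, Equiv.apply_symm_apply, comp_id]

theorem pathEquiv_comp_pathEnds (θ : E.cyl.obj X ⟶ A) :
    E.pathEquiv X A θ ≫ E.pathEnds A = prod.lift (E.d0.app X ≫ θ) (E.d1.app X ≫ θ) := by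
  have h0 := E.d0.naturality_assoc (E.pathEquiv X A θ) ((E.pathEquiv _ A).symm (𝟙 _))
  have h1 := E.d1.naturality_assoc (E.pathEquiv X A θ) ((E.pathEquiv _ A).symm (𝟙 _))
  rw [map_pathEquiv_comp] at h0 h1
  rw [pathEnds, prod.comp_lift, ← h0, ← h1]
  rfl

theorem extendsHomotopies_iff_hasLiftingProperty (j : K ⟶ L) :
    E.ExtendsHomotopies A j ↔ HasLiftingProperty j (E.pathEnds A) := by
  constructor
  · refine fun hj => ⟨fun {x y} sq => ?_⟩
    obtain ⟨θ, rfl⟩ := (E.pathEquiv K A).surjective x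
    have hw : prod.lift (E.d0.app K ≫ θ) (E.d1.app K ≫ θ) = j ≫ y := by
      rw [← pathEquiv_comp_pathEnds, sq.w]
    obtain ⟨ψ, hψ, hψ0, hψ1⟩ := hj θ (y ≫ prod.fst) (y ≫ prod.snd)
      (by rw [← assoc, ← hw, prod.lift_fst]) (by rw [← assoc, ← hw, prod.lift_snd])
    refine ⟨⟨⟨E.pathEquiv L A ψ, by rw [comp_pathEquiv, hψ], ?_⟩⟩⟩
    rw [pathEquiv_comp_pathEnds, hψ0, hψ1, ← prod.comp_lift, prod.lift_fst_snd, comp_id]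
  · intro hj θ b c hb hc
    have sq : CommSq (E.pathEquiv K A θ) j (E.pathEnds A) (prod.lift b c) :=
      ⟨by rw [pathEquiv_comp_pathEnds, prod.comp_lift, hb, hc]⟩
    obtain ⟨ψ, hψ⟩ := (E.pathEquiv L A).surjective sq.lift
    have hends : prod.lift (E.d0.app L ≫ ψ) (E.d1.app L ≫ ψ) = prod.lift b c := by
      rw [← pathEquiv_comp_pathEnds, hψ, sq.fac_right]
    refine ⟨ψ, ?_, ?_, ?_⟩
    · apply (E.pathEquiv K A).injective
      rw [← comp_pathEquiv, hψ, sq.fac_left]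
    · simpa only [prod.lift_fst] using congrArg (· ≫ prod.fst) hends
    · simpa only [prod.lift_snd] using congrArg (· ≫ prod.snd) hends

theorem extendsHomotopies_of_saturatedClassGen {S : MorphismProperty (Psh C)}
    (hS : ∀ ⦃K L : Psh C⦄ (j : K ⟶ L), S j → E.ExtendsHomotopies A j) {j : K ⟶ L}
    (hj : SaturatedClassGen.{w} S j) : E.ExtendsHomotopies A j := by
  have hA : S.rlp (E.pathEnds A) := fun _ _ i hi =>
    (E.extendsHomotopies_iff_hasLiftingProperty i).1 (hS i hi)
  exact (E.extendsHomotopies_iff_hasLiftingProperty j).2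
    (saturatedClassGen_le_rlp_llp S j hj (E.pathEnds A) hA)

end PathObject

variable {E} in
theorem NaivelyFibrant.hasLiftingProperty_gluingBoth {S : MorphismProperty (Psh C)} {A : Psh C}
    (hA : E.NaivelyFibrant S A) {K L : Psh C} {j : K ⟶ L} (hj : S j) :
    HasLiftingProperty (E.gluingBoth j) (terminal.from A) :=
  hA _ fun _ _ _ hg => hg _ ⟨1, .glue j (.ofS j hj)⟩

section TWeakEquiv

variable {T : Monad (Psh C)} {X Y Z : Psh C}

variable {E} in
theorem TWeakEquiv.comp {f : X ⟶ Y} {g : Y ⟶ Z} (hf : E.TWeakEquiv T f) (hg : E.TWeakEquiv T g) :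
    E.TWeakEquiv T (f ≫ g) := fun A => by
  rw [precomp_comp]
  exact (hf A).comp (hg A)

variable {E} in
theorem TWeakEquiv.of_comp_left {f : X ⟶ Y} {g : Y ⟶ Z} (hf : E.TWeakEquiv T f)
    (hfg : E.TWeakEquiv T (f ≫ g)) : E.TWeakEquiv T g := fun A => by
  have h := hfg A
  rw [precomp_comp] at h
  exact (Function.Bijective.of_comp_iff' (hf A) _).1 h

theorem tWeakEquiv_unit {S : MorphismProperty (Psh C)}
    (hS : ∀ (A : T.Algebra) ⦃K L : Psh C⦄ (j : K ⟶ L), S j →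
      HasLiftingProperty (E.gluingBoth j) (terminal.from A.A))
    (hX : SaturatedClassGen.{w} S (T.η.app X)) : E.TWeakEquiv T (T.η.app X) := fun A =>
  (E.extendsHomotopies_of_saturatedClassGen (fun _ _ j hj => .of_gluingBoth (hS A j hj))
    hX).bijective_precomp (surjective_unit_comp A X)

variable {E} in
theorem TWeakEquiv.map (hη : ∀ X : Psh C, E.TWeakEquiv T (T.η.app X)) {f : X ⟶ Y}
    (hf : E.TWeakEquiv T f) : E.TWeakEquiv T (T.map f) :=
  (hη X).of_comp_left (T.η.naturality f ▸ hf.comp (hη Y))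

variable {E} in
theorem TWeakEquiv.exists_htpyInverse {A B : T.Algebra} {f : A.A ⟶ B.A}
    (hf : E.TWeakEquiv T f) :
    ∃ f' : B.A ⟶ A.A, E.HtpyStar (f ≫ f') (𝟙 A.A) ∧ E.HtpyStar (f' ≫ f) (𝟙 B.A) :=
  E.exists_htpyInverse (hf A).surjective (hf B).injective

end TWeakEquiv

end ElementaryHomotopyData

theorem tWeakEquiv_minimal_general {C : Type u} [SmallCategory C]
    (E : ElementaryHomotopyData C) (T : Monad (Psh C)) (S : MorphismProperty (Psh C))
    (hunit_mem : ∀ X : Psh C, SaturatedClassGen.{w} S (T.η.app X))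
    (hfibrant : ∀ (A : T.Algebra) ⦃K L : Psh C⦄ (j : K ⟶ L), S j →
      HasLiftingProperty (E.gluingBoth j) (terminal.from A.A))
    (W' : MorphismProperty (Psh C))
    (h32_comp : ∀ ⦃X Y Z : Psh C⦄ (f : X ⟶ Y) (g : Y ⟶ Z), W' f → W' g → W' (f ≫ g))
    (h32_left : ∀ ⦃X Y Z : Psh C⦄ (f : X ⟶ Y) (g : Y ⟶ Z), W' g → W' (f ≫ g) → W' f)
    (hhe : ∀ ⦃X Y : Psh C⦄ (f : X ⟶ Y),
        (∃ f' : Y ⟶ X, E.HtpyStar (f ≫ f') (𝟙 X) ∧ E.HtpyStar (f' ≫ f) (𝟙 Y)) → W' f)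
    (hunits : ∀ X : Psh C, W' (T.η.app X)) :
    E.TWeakEquiv T ≤ W' := by
  intro X Y f hf
  have hη (Z : Psh C) : E.TWeakEquiv T (T.η.app Z) := E.tWeakEquiv_unit hfibrant (hunit_mem Z)
  have hTf : W' (T.map f) :=
    hhe _ ((hf.map hη).exists_htpyInverse (A := T.free.obj X) (B := T.free.obj Y))
  have hnat : f ≫ T.η.app Y = T.η.app X ≫ T.map f := T.η.naturality f
  exact h32_left f (T.η.app Y) (hunits Y) (hnat ▸ h32_comp _ _ (hunits X) hTf)

/-- Proposition: under (M1)-(M3), the class of `T`-weak equivalences is the least class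
with the three-for-two property containing the homotopy equivalences and the units. -/
theorem tWeakEquiv_minimal {C : Type u} [SmallCategory C]
    (E : ElementaryHomotopyData C) (T : Monad (Psh C))
    (hM1a : ∀ ⦃K L : Psh C⦄ (j : K ⟶ L), CategoryTheory.Mono j →
      CategoryTheory.Mono (T.toFunctor.map j))
    (hM1b : ∀ X : Psh C, CategoryTheory.Mono (T.η.app X))
    {ι : Type u} (G : ι → Psh C)
    (hM2 : ∀ X : Psh C, SaturatedClassGen.{u} (unitsOf T G) (T.η.app X))
    (hM3 : ∀ A : T.Algebra, E.NaivelyFibrant (unitsOf T G) A.A)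
    (W' : MorphismProperty (Psh C))
    (h32_comp : ∀ ⦃X Y Z : Psh C⦄ (f : X ⟶ Y) (g : Y ⟶ Z), W' f → W' g → W' (f ≫ g))
    (h32_left : ∀ ⦃X Y Z : Psh C⦄ (f : X ⟶ Y) (g : Y ⟶ Z), W' g → W' (f ≫ g) → W' f)
    (h32_right : ∀ ⦃X Y Z : Psh C⦄ (f : X ⟶ Y) (g : Y ⟶ Z), W' f → W' (f ≫ g) → W' g)
    (hhe : ∀ ⦃X Y : Psh C⦄ (f : X ⟶ Y),
        (∃ f' : Y ⟶ X, E.HtpyStar (f ≫ f') (𝟙 X) ∧ E.HtpyStar (f' ≫ f) (𝟙 Y)) → W' f)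
    (hunits : ∀ X : Psh C, W' (T.η.app X)) :
    E.TWeakEquiv T ≤ W' :=
  tWeakEquiv_minimal_general E T (unitsOf T G) hM2
    (fun A _ _ _ hj => (hM3 A).hasLiftingProperty_gluingBoth hj) W' h32_comp h32_left hhe hunits

end PaperMSMonad
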